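/- For every even natural number n ≥ 2, the Orchard crossing number of the star graph K_{n,1} equals n(n−2)²/8. -/

import Mathlib

/-!
Common definitions for the Orchard crossing number
(Feder–Garber, "The Orchard crossing number of an abstract graph").
-/

noncomputable section

/-- Points of the plane. -/
abbrev Pt : Type := ℝ × ℝ

/-- The line through two points of the plane. -/
def lineThrough (p q : Pt) : Set Pt := (affineSpan ℝ ({p, q} : Set Pt) : Set Pt)

/-- A line (or any set) `L` separates the points `P` and `Q` if both lie off `L`
and they lie in different connected components of the complement of `L`. -/
def Separates (L : Set Pt) (P Q : Pt) : Prop :=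
  P ∉ L ∧ Q ∉ L ∧ connectedComponentIn Lᶜ P ≠ connectedComponentIn Lᶜ Q

theorem Separates.symm {L : Set Pt} {P Q : Pt} (h : Separates L P Q) : Separates L Q P :=
  ⟨h.2.1, h.1, h.2.2.symm⟩

/-- A generic configuration: a finite set of points, no three of which are collinear. -/
def GenericConfig (S : Set Pt) : Prop :=
  S.Finite ∧ ∀ p ∈ S, ∀ q ∈ S, ∀ r ∈ S, p ≠ q → p ≠ r → q ≠ r →
    ¬ Collinear ℝ ({p, q, r} : Set Pt)

/-- A finite set of points is in convex position if every point of it is an extreme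
point of its convex hull, i.e. lies outside the convex hull of the other points. -/
def ConvexPosition (S : Set Pt) : Prop :=
  ∀ p ∈ S, p ∉ convexHull ℝ (S \ {p})

variable {V : Type*} [Fintype V] [DecidableEq V]

/-- A rectilinear drawing of a graph on vertex set `V`: an injective placement of the
vertices in the plane whose image is a generic configuration. -/
def IsRectDrawing (f : V → Pt) : Prop :=
  Function.Injective f ∧ GenericConfig (Set.range f)

/-- `sepCount f s t` is `n(s,t)`: the number of (unordered) pairs of vertices, both
different from `s` and `t`, whose drawn points span a line separating `f s` from `f t`. -/
def sepCount (f : V → Pt) (s t : V) : ℕ :=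
  Set.ncard {e : Finset V | ∃ a b : V, e = {a, b} ∧ a ≠ b ∧ s ∉ e ∧ t ∉ e ∧
    Separates (lineThrough (f a) (f b)) (f s) (f t)}

theorem sepCount_symm (f : V → Pt) (s t : V) : sepCount f s t = sepCount f t s := by
  unfold sepCount
  congr 1
  ext e
  constructor
  · rintro ⟨a, b, rfl, hab, hs, ht, hsep⟩
    exact ⟨a, b, rfl, hab, ht, hs, hsep.symm⟩
  · rintro ⟨a, b, rfl, hab, ht, hs, hsep⟩
    exact ⟨a, b, rfl, hab, hs, ht, hsep.symm⟩

/-- The crossing number `n(R(G))` of a drawing: the sum of `n(s,t)` over all edges. -/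
def drawingCrossings (G : SimpleGraph V) (f : V → Pt) : ℕ :=
  ∑ e ∈ G.edgeSet.toFinite.toFinset,
    Sym2.lift ⟨fun s t => sepCount f s t, fun s t => sepCount_symm f s t⟩ e

/-- The Orchard crossing number: the minimum of `n(R(G))` over all rectilinear drawings. -/
def OCN (G : SimpleGraph V) : ℕ :=
  sInf {n | ∃ f : V → Pt, IsRectDrawing f ∧ drawingCrossings G f = n}

/-- The maximal Orchard crossing number: the maximum of `n(R(G))` over all drawings. -/
def MOCN (G : SimpleGraph V) : ℕ :=
  sSup {n | ∃ f : V → Pt, IsRectDrawing f ∧ drawingCrossings G f = n}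

/-- The open segment drawn for an edge. -/
def edgeSeg (f : V → Pt) (e : Sym2 V) : Set Pt :=
  Sym2.lift ⟨fun a b => openSegment ℝ (f a) (f b), fun a b => openSegment_symm ℝ (f a) (f b)⟩ e

/-- The number of unordered pairs of distinct edges of `G` whose drawn open segments
intersect. -/
def crossPairs (G : SimpleGraph V) (f : V → Pt) : ℕ :=
  Set.ncard {p : Finset (Sym2 V) | ∃ e₁ e₂ : Sym2 V, p = {e₁, e₂} ∧ e₁ ≠ e₂ ∧
    e₁ ∈ G.edgeSet ∧ e₂ ∈ G.edgeSet ∧ (edgeSeg f e₁ ∩ edgeSeg f e₂).Nonempty}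

/-- The rectilinear crossing number: the minimum number of crossing pairs of edges
over all rectilinear drawings. -/
def rcr (G : SimpleGraph V) : ℕ :=
  sInf {n | ∃ f : V → Pt, IsRectDrawing f ∧ crossPairs G f = n}

/-- The number of 4-element subsets of the drawn points which are in convex position. -/
def convexFour (f : V → Pt) : ℕ :=
  Set.ncard {Q : Finset Pt | Q.card = 4 ∧ (Q : Set Pt) ⊆ Set.range f ∧
    ConvexPosition (Q : Set Pt)}

/-- The cyclic successor on `Fin n`. -/
def nextFin {n : ℕ} (i : Fin n) : Fin n :=
  ⟨(i.val + 1) % n, Nat.mod_lt _ (Nat.zero_lt_of_lt i.isLt)⟩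

/-- The star graph `K_{n,1}` on `n+1` vertices: the center `0` is joined to each of
the `n` outer vertices. -/
def starGraph (n : ℕ) : SimpleGraph (Fin (n + 1)) :=
  SimpleGraph.fromEdgeSet {e | ∃ i : Fin n, e = s((0 : Fin (n + 1)), i.succ)}

/-- The wheel graph `W_{n,1}` on `n+1` vertices: a cycle on the `n` outer vertices
together with a hub `0` joined to each of them. -/
def wheelGraph (n : ℕ) : SimpleGraph (Fin (n + 1)) :=
  SimpleGraph.fromEdgeSet
    ({e | ∃ i : Fin n, e = s((0 : Fin (n + 1)), i.succ)} ∪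
     {e | ∃ i : Fin n, e = s(i.succ, (nextFin i).succ)})

/-- The cycle graph `C_n` on the outer vertices `1, …, n` of `Fin (n+1)`, together
with the isolated vertex `0`. -/
def cycleWithIsolated (n : ℕ) : SimpleGraph (Fin (n + 1)) :=
  SimpleGraph.fromEdgeSet {e | ∃ i : Fin n, e = s(i.succ, (nextFin i).succ)}

/-- `HullCycle f` says that for every `i`, all the other drawn points lie (strictly) on
one side of the line through `f i` and `f (i+1)`; for an injective generic placement this
means the points are in convex position and occur around the convex hull exactly in the
cyclic order `f 0, f 1, …`. -/
def HullCycle {m : ℕ} (f : Fin m → Pt) : Prop :=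
  ∀ i j l : Fin m, j ≠ i → j ≠ nextFin i → l ≠ i → l ≠ nextFin i →
    ¬ Separates (lineThrough (f i) (f (nextFin i))) (f j) (f l)

end

/-!
Orient a pair of leaves `i`, `j` from `i` to `j` when the centre, `i`, `j` are in counterclockwise
order. For each triangle of leaves, the number of its sides that separate the centre from the
opposite vertex is at least the number of vertices from which both edges point outwards: both are
`0` if the centre lies inside the triangle, and otherwise there is one such vertex and at least one
such side. Summing over all triangles, the crossing number is at least `∑ i, (d i).choose 2`, where
`d i` is the outdegree of the leaf `i` in a tournament. As the outdegrees add up to `n.choose 2`,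
convexity bounds this sum below by its value at outdegrees that differ by at most one.

When the leaves lie on a circle about the centre, a triangle that does not contain the centre has
exactly one side that separates the centre from the opposite vertex. Hence equality holds for the
centre and `n` of the vertices of a regular polygon with an odd number `n` or `n + 1` of vertices,
where the outdegrees are balanced.
-/

open Finset

section Combinatorics

variable {α : Type*}

theorem sum_card_tournament_eq_choose_two {s : Finset α} {r : α → α → Prop}
    [∀ i, DecidablePred (r i)] (hirrefl : ∀ i ∈ s, ¬ r i i)
    (htri : ∀ i ∈ s, ∀ j ∈ s, i ≠ j → (r i j ↔ ¬ r j i)) :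
    ∑ i ∈ s, #{j ∈ s | r i j} = (#s).choose 2 := by
  classical
  have hsplit : ∀ i ∈ s, #{j ∈ s | r i j} + #{j ∈ s | r j i} = #s - 1 := by
    intro i hi
    rw [← card_erase_of_mem hi, ← card_union_of_disjoint]
    · congr 1
      ext j
      grind
    · rw [disjoint_filter]
      grind
  have hswap : ∑ i ∈ s, #{j ∈ s | r i j} = ∑ i ∈ s, #{j ∈ s | r j i} :=
    sum_card_bipartiteAbove_eq_sum_card_bipartiteBelow r
  have htwo : 2 * ∑ i ∈ s, #{j ∈ s | r i j} = #s * (#s - 1) := by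
    rw [two_mul]
    nth_rw 2 [hswap]
    rw [← sum_add_distrib, sum_congr rfl hsplit, sum_const, smul_eq_mul]
  rw [Nat.choose_two_right]
  lia

theorem cast_choose_two_add_choose_two_sub (d t : ℕ) :
    ((d.choose 2 : ℚ) + ((t + 1).choose 2 : ℚ)) - t * d = (d - t) * (d - (t + 1)) / 2 := by
  rw [Nat.cast_choose_two, Nat.cast_choose_two]
  push_cast
  ring

theorem mul_le_choose_two_add_choose_two (t d : ℕ) :
    t * d ≤ d.choose 2 + (t + 1).choose 2 := by
  have hsub := cast_choose_two_add_choose_two_sub d t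
  have hprod : (0 : ℚ) ≤ (d - t) * (d - (t + 1)) := by
    rcases le_or_gt d t with h | h
    · have : (d : ℚ) ≤ t := mod_cast h
      nlinarith
    · have : (t : ℚ) + 1 ≤ d := mod_cast h
      nlinarith
  have : (t : ℚ) * d ≤ d.choose 2 + (t + 1).choose 2 := by linarith
  exact_mod_cast this

theorem mul_eq_choose_two_add_choose_two {t d : ℕ} (hd : d = t ∨ d = t + 1) :
    t * d = d.choose 2 + (t + 1).choose 2 := by
  have hsub := cast_choose_two_add_choose_two_sub d t
  have : (t : ℚ) * d = d.choose 2 + (t + 1).choose 2 := by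
    rcases hd with rfl | rfl <;> push_cast at hsub ⊢ <;> linarith
  exact_mod_cast this

theorem half_mul_choose_two (n : ℕ) :
    (n - 1) / 2 * n.choose 2 =
      n * ((n - 1) / 2) * ((n - 2) / 2) / 2 + n * ((n - 1) / 2 + 1).choose 2 := by
  obtain hn | hn := lt_or_ge n 2
  · interval_cases n <;> rfl
  have hpred : n - 1 = (n - 1) / 2 + (n - 2) / 2 + 1 := by lia
  have hchoose (m : ℕ) : 2 * (m + 1).choose 2 = (m + 1) * m := by
    rw [Nat.choose_two_right, Nat.add_sub_cancel, Nat.mul_div_cancel']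
    exact mul_comm m (m + 1) ▸ (Nat.even_mul_succ_self m).two_dvd
  have hn2 := hchoose (n - 1)
  have ht2 := hchoose ((n - 1) / 2)
  rw [Nat.sub_add_cancel (by lia)] at hn2
  have htwo : 2 * ((n - 1) / 2 * n.choose 2) =
      n * ((n - 1) / 2) * ((n - 2) / 2) + 2 * (n * ((n - 1) / 2 + 1).choose 2) := by
    rw [mul_left_comm, hn2, mul_left_comm 2 n, ht2]
    generalize (n - 1) / 2 = t at *
    rw [hpred]
    ring
  lia

theorem le_sum_choose_two {s : Finset α} {d : α → ℕ} (hd : ∑ i ∈ s, d i = (#s).choose 2) :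
    #s * ((#s - 1) / 2) * ((#s - 2) / 2) / 2 ≤ ∑ i ∈ s, (d i).choose 2 := by
  have hsum := sum_le_sum fun i (_ : i ∈ s) ↦ mul_le_choose_two_add_choose_two ((#s - 1) / 2) (d i)
  rw [← mul_sum, hd, half_mul_choose_two, sum_add_distrib, sum_const, smul_eq_mul] at hsum
  exact Nat.le_of_add_le_add_right hsum

theorem sum_choose_two_eq {s : Finset α} {d : α → ℕ} (hd : ∑ i ∈ s, d i = (#s).choose 2)
    (hbal : ∀ i ∈ s, d i = (#s - 1) / 2 ∨ d i = (#s - 1) / 2 + 1) :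
    ∑ i ∈ s, (d i).choose 2 = #s * ((#s - 1) / 2) * ((#s - 2) / 2) / 2 := by
  have hsum := sum_congr rfl fun i hi ↦ mul_eq_choose_two_add_choose_two (hbal i hi)
  rw [← mul_sum, hd, half_mul_choose_two, sum_add_distrib, sum_const, smul_eq_mul] at hsum
  exact (Nat.add_right_cancel hsum).symm

theorem sum_card_filter_powersetCard [DecidableEq α] (s : Finset α) (k : ℕ)
    (P : α → Finset α → Prop) [∀ i, DecidablePred (P i)] :
    ∑ i ∈ s, #{e ∈ powersetCard k s | i ∉ e ∧ P i e} =
      ∑ T ∈ powersetCard (k + 1) s, #{i ∈ T | P i (T.erase i)} := by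
  rw [← card_sigma, ← card_sigma]
  refine card_nbij' (fun x ↦ ⟨insert x.1 x.2, x.1⟩) (fun x ↦ ⟨x.2, x.1.erase x.2⟩) ?_ ?_ ?_ ?_
  · rintro ⟨i, e⟩ h
    simp only [coe_sigma, Set.mem_sigma_iff, mem_coe, mem_filter, mem_powersetCard] at h ⊢
    obtain ⟨hi, ⟨hes, hcard⟩, hie, hP⟩ := h
    exact ⟨⟨insert_subset hi hes, by rw [card_insert_of_notMem hie, hcard]⟩,
      mem_insert_self i e, by rwa [erase_insert hie]⟩
  · rintro ⟨T, i⟩ h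
    simp only [coe_sigma, Set.mem_sigma_iff, mem_coe, mem_filter, mem_powersetCard] at h ⊢
    obtain ⟨⟨hTs, hcard⟩, hi, hP⟩ := h
    exact ⟨hTs hi, ⟨(erase_subset i T).trans hTs, by rw [card_erase_of_mem hi, hcard]; rfl⟩,
      notMem_erase i T, hP⟩
  · rintro ⟨i, e⟩ h
    simp only [coe_sigma, Set.mem_sigma_iff, mem_coe, mem_filter] at h
    simp only [erase_insert h.2.2.1]
  · rintro ⟨T, i⟩ h
    simp only [coe_sigma, Set.mem_sigma_iff, mem_coe, mem_filter] at h
    simp only [insert_erase h.2.1]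

theorem card_filter_erase_triple [DecidableEq α] {a b c : α} (hab : a ≠ b) (hac : a ≠ c)
    (hbc : b ≠ c) (P : α → Finset α → Prop) [∀ i, DecidablePred (P i)] :
    #{i ∈ ({a, b, c} : Finset α) | P i (({a, b, c} : Finset α).erase i)} =
      (if P a {b, c} then 1 else 0) + (if P b {c, a} then 1 else 0) +
        (if P c {a, b} then 1 else 0) := by
  have ha : ({a, b, c} : Finset α).erase a = {b, c} := by grind
  have hb : ({a, b, c} : Finset α).erase b = {c, a} := by grind
  have hc : ({a, b, c} : Finset α).erase c = {a, b} := by grind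
  rw [card_filter, sum_insert (by simp [hab, hac]), sum_pair hbc, ha, hb, hc, add_assoc]

end Combinatorics

section SignPatterns

variable {R : Type*} [CommRing R] [LinearOrder R] [IsStrictOrderedRing R] {x y z s : R}

-- Here `x`, `y`, `z` stand for the signed areas of `o a b`, `o b d`, `o d a` and `s` for that of
-- `a b d`. The left-hand side counts the vertices of `a b d` whose ray from `o` has both others on
-- its left, the right-hand side counts the sides that separate `o` from the opposite vertex.
theorem sources_le_minority (hx : x ≠ 0) (hy : y ≠ 0) (hz : z ≠ 0) (hs : s ≠ 0) :
    (if 0 < x ∧ z < 0 then 1 else 0) + (if 0 < y ∧ x < 0 then 1 else 0) +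
        (if 0 < z ∧ y < 0 then 1 else 0) ≤
      (if y * s < 0 then 1 else 0) + (if z * s < 0 then 1 else 0) +
        (if x * s < 0 then 1 else 0) := by
  rcases hx.lt_or_gt with hx | hx <;> rcases hy.lt_or_gt with hy | hy <;>
    rcases hz.lt_or_gt with hz | hz <;> rcases hs.lt_or_gt with hs | hs <;>
    simp [mul_neg_iff, hx, hy, hz, hs, hx.not_gt, hy.not_gt, hz.not_gt, hs.not_gt]

theorem minority_eq_sources (hx : x ≠ 0) (hy : y ≠ 0) (hz : z ≠ 0)
    (hxy : 0 < x * y → 0 < x * s) (hyz : 0 < y * z → 0 < y * s) (hzx : 0 < z * x → 0 < z * s) :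
    (if y * s < 0 then 1 else 0) + (if z * s < 0 then 1 else 0) + (if x * s < 0 then 1 else 0) =
      (if 0 < x ∧ z < 0 then 1 else 0) + (if 0 < y ∧ x < 0 then 1 else 0) +
        (if 0 < z ∧ y < 0 then 1 else 0) := by
  rcases hx.lt_or_gt with hx | hx <;> rcases hy.lt_or_gt with hy | hy <;>
    rcases hz.lt_or_gt with hz | hz <;>
    grind [mul_neg_iff, mul_pos_iff]

end SignPatterns

section SignedArea

/-- Twice the signed area of the triangle `p q r`, positive when `p`, `q`, `r` are in
counterclockwise order. -/
def signedArea (p q r : Pt) : ℝ :=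
  (q.1 - p.1) * (r.2 - p.2) - (q.2 - p.2) * (r.1 - p.1)

/-- The squared Euclidean distance of two points of the plane; `dist` on `Pt` is the sup
distance. -/
def sqDist (p q : Pt) : ℝ :=
  (q.1 - p.1) ^ 2 + (q.2 - p.2) ^ 2

theorem sqDist_pos {p q : Pt} (hpq : p ≠ q) : 0 < sqDist p q := by
  contrapose! hpq
  unfold sqDist at hpq
  ext <;> nlinarith [sq_nonneg (q.1 - p.1), sq_nonneg (q.2 - p.2)]

theorem signedArea_rotate (p q r : Pt) : signedArea p q r = signedArea q r p := by
  unfold signedArea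
  ring

theorem signedArea_swap (p q r : Pt) : signedArea p q r = -signedArea p r q := by
  unfold signedArea
  ring

theorem signedArea_self (p q : Pt) : signedArea p q q = 0 := by
  unfold signedArea
  ring

theorem signedArea_lineMap (p q x y : Pt) (t : ℝ) :
    signedArea p q (AffineMap.lineMap x y t) =
      (1 - t) * signedArea p q x + t * signedArea p q y := by
  simp only [signedArea, AffineMap.lineMap_apply_module, Prod.fst_add, Prod.snd_add, Prod.smul_fst,
    Prod.smul_snd, smul_eq_mul]
  ring

theorem continuous_signedArea (p q : Pt) : Continuous (signedArea p q) := by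
  unfold signedArea
  fun_prop

theorem mem_lineThrough_iff {p q : Pt} (hpq : p ≠ q) (x : Pt) :
    x ∈ lineThrough p q ↔ signedArea p q x = 0 := by
  rw [lineThrough, SetLike.mem_coe, mem_affineSpan_pair_iff_exists_lineMap_eq]
  constructor
  · rintro ⟨t, rfl⟩
    rw [signedArea_lineMap, signedArea_self, signedArea_rotate, signedArea_self]
    ring
  · intro hx
    refine ⟨((x.1 - p.1) * (q.1 - p.1) + (x.2 - p.2) * (q.2 - p.2)) / sqDist p q, ?_⟩
    have hd := (sqDist_pos hpq).ne'
    ext <;> simp only [AffineMap.lineMap_apply_module', Prod.fst_add, Prod.snd_add, Prod.smul_fst,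
      Prod.smul_snd, Prod.fst_sub, Prod.snd_sub, smul_eq_mul] <;> field_simp <;>
      unfold signedArea at hx <;> unfold sqDist
    · linear_combination (q.2 - p.2) * hx
    · linear_combination -(q.1 - p.1) * hx

theorem collinear_iff_signedArea_eq_zero {p q : Pt} (hpq : p ≠ q) (r : Pt) :
    Collinear ℝ ({p, q, r} : Set Pt) ↔ signedArea p q r = 0 := by
  rw [← mem_lineThrough_iff hpq, Set.pair_comm q r, Set.insert_comm]
  constructor
  · intro h
    exact h.mem_affineSpan_of_mem_of_ne (by simp) (by simp) (by simp) hpq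
  · intro h
    exact (collinear_insert_iff_of_mem_affineSpan h).2 (collinear_pair ℝ p q)

theorem connectedComponentIn_lineThrough_eq {p q x y : Pt} (hpq : p ≠ q)
    (h : 0 < signedArea p q x * signedArea p q y) :
    connectedComponentIn (lineThrough p q)ᶜ x = connectedComponentIn (lineThrough p q)ᶜ y := by
  refine connectedComponentIn_eq <| (convex_segment x y).isPreconnected.subset_connectedComponentIn
    (left_mem_segment ℝ x y) ?_ (right_mem_segment ℝ x y)
  rw [segment_eq_image_lineMap]
  rintro _ ⟨t, ⟨ht0, ht1⟩, rfl⟩ hmem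
  rw [mem_lineThrough_iff hpq, signedArea_lineMap] at hmem
  have hx := mul_self_pos.2 (left_ne_zero_of_mul h.ne')
  have hpos := convex_Ioi (0 : ℝ) hx h (sub_nonneg.2 ht1) ht0 (sub_add_cancel 1 t)
  simp only [smul_eq_mul, Set.mem_Ioi] at hpos
  exact hpos.ne' (by linear_combination signedArea p q x * hmem)

theorem connectedComponentIn_lineThrough_ne {p q x y : Pt} (hpq : p ≠ q)
    (h : signedArea p q x * signedArea p q y < 0) :
    connectedComponentIn (lineThrough p q)ᶜ x ≠ connectedComponentIn (lineThrough p q)ᶜ y := by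
  intro heq
  have hx : x ∈ (lineThrough p q)ᶜ := mt (mem_lineThrough_iff hpq x).1 (left_ne_zero_of_mul h.ne)
  have hy : y ∈ (lineThrough p q)ᶜ := mt (mem_lineThrough_iff hpq y).1 (right_ne_zero_of_mul h.ne)
  have hxm := mem_connectedComponentIn hx
  have hym := heq ▸ mem_connectedComponentIn hy
  have hcont := (continuous_signedArea p q).continuousOn
    (s := connectedComponentIn (lineThrough p q)ᶜ x)
  obtain ⟨z, hz, hz0⟩ : 0 ∈ signedArea p q '' connectedComponentIn (lineThrough p q)ᶜ x := by
    rcases mul_neg_iff.1 h with ⟨h1, h2⟩ | ⟨h1, h2⟩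
    · exact isPreconnected_connectedComponentIn.intermediate_value hym hxm hcont ⟨h2.le, h1.le⟩
    · exact isPreconnected_connectedComponentIn.intermediate_value hxm hym hcont ⟨h1.le, h2.le⟩
  exact connectedComponentIn_subset _ _ hz ((mem_lineThrough_iff hpq z).2 hz0)

theorem separates_lineThrough_iff {p q : Pt} (hpq : p ≠ q) (x y : Pt) :
    Separates (lineThrough p q) x y ↔ signedArea p q x * signedArea p q y < 0 := by
  refine ⟨fun ⟨hx, hy, hne⟩ ↦ ?_, fun h ↦ ⟨?_, ?_, connectedComponentIn_lineThrough_ne hpq h⟩⟩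
  · rw [mem_lineThrough_iff hpq] at hx hy
    by_contra! hnn
    exact hne (connectedComponentIn_lineThrough_eq hpq (hnn.lt_of_ne' (mul_ne_zero hx hy)))
  · exact mt (mem_lineThrough_iff hpq x).1 (left_ne_zero_of_mul h.ne)
  · exact mt (mem_lineThrough_iff hpq y).1 (right_ne_zero_of_mul h.ne)

theorem signedArea_mul_sqDist_of_sqDist_eq {o p q r : Pt} {R : ℝ} (hp : sqDist o p = R)
    (hq : sqDist o q = R) (hr : sqDist o r = R) :
    signedArea p q r * (2 * R) =
      signedArea o p q * sqDist q r + signedArea o q r * sqDist p q := by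
  linear_combination (norm := skip) 2 * signedArea o p r * hq - signedArea o p q * (hq + hr) -
    signedArea o q r * (hp + hq)
  unfold sqDist signedArea
  ring

theorem mul_signedArea_pos_of_sqDist_eq {o p q r : Pt} {R : ℝ} (hp : sqDist o p = R)
    (hq : sqDist o q = R) (hr : sqDist o r = R)
    (h : 0 < signedArea o p q * signedArea o q r) :
    0 < signedArea o p q * signedArea p q r := by
  have hop : o ≠ p := by
    rintro rfl
    simp [signedArea] at h
  have hpq : p ≠ q := by
    rintro rfl
    simp [signedArea_self] at h
  have hR : 0 < 2 * R := by
    linarith [hp ▸ sqDist_pos hop]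
  refine pos_of_mul_pos_left ?_ hR.le
  rw [mul_assoc, signedArea_mul_sqDist_of_sqDist_eq hp hq hr]
  have hfar : 0 ≤ sqDist q r := by unfold sqDist; positivity
  nlinarith [mul_pos h (sqDist_pos hpq), mul_nonneg (mul_self_nonneg (signedArea o p q)) hfar]

theorem sign_signedArea_of_sqDist_eq {o p q r : Pt} {R : ℝ} (hp : sqDist o p = R)
    (hq : sqDist o q = R) (hr : sqDist o r = R) :
    (0 < signedArea o p q * signedArea o q r → 0 < signedArea o p q * signedArea p q r) ∧
      (0 < signedArea o q r * signedArea o r p → 0 < signedArea o q r * signedArea p q r) ∧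
      (0 < signedArea o r p * signedArea o p q → 0 < signedArea o r p * signedArea p q r) := by
  refine ⟨mul_signedArea_pos_of_sqDist_eq hp hq hr, ?_, ?_⟩
  · rw [signedArea_rotate p q r]
    exact mul_signedArea_pos_of_sqDist_eq hq hr hp
  · rw [← signedArea_rotate r p q]
    exact mul_signedArea_pos_of_sqDist_eq hr hp hq

-- Two of the triangles `o p q`, `o q r`, `o r p` have the same orientation, and then `p q r` has
-- that orientation as well.
theorem signedArea_ne_zero_of_sqDist_eq {o p q r : Pt} {R : ℝ} (hp : sqDist o p = R)
    (hq : sqDist o q = R) (hr : sqDist o r = R) (hpq : signedArea o p q ≠ 0)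
    (hqr : signedArea o q r ≠ 0) (hrp : signedArea o r p ≠ 0) : signedArea p q r ≠ 0 := by
  intro h0
  obtain ⟨hle_pq, hle_qr, hle_rp⟩ := sign_signedArea_of_sqDist_eq hp hq hr
  simp only [h0, mul_zero, lt_irrefl, imp_false, not_lt] at hle_pq hle_qr hle_rp
  have hneg_pq := hle_pq.lt_of_ne (mul_ne_zero hpq hqr)
  have hneg_qr := hle_qr.lt_of_ne (mul_ne_zero hqr hrp)
  have hneg_rp := hle_rp.lt_of_ne (mul_ne_zero hrp hpq)
  nlinarith [mul_neg_of_pos_of_neg (mul_pos_of_neg_of_neg hneg_pq hneg_qr) hneg_rp,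
    sq_nonneg (signedArea o p q * signedArea o q r * signedArea o r p)]

end SignedArea

section Drawing

variable {V : Type*} {f : V → Pt} {c : V}

theorem isRectDrawing_iff [Finite V] :
    IsRectDrawing f ↔ Function.Injective f ∧
      ∀ u v w, u ≠ v → u ≠ w → v ≠ w → signedArea (f u) (f v) (f w) ≠ 0 := by
  refine and_congr_right fun hf ↦ ?_
  simp only [GenericConfig, Set.finite_range, true_and, Set.forall_mem_range, hf.ne_iff]
  refine forall₃_congr fun u v w ↦ forall_congr' fun huv ↦ ?_
  rw [collinear_iff_signedArea_eq_zero (hf.ne huv)]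

theorem injective_of_sqDist_eq {R : ℝ} (hR : 0 < R) (hcirc : ∀ v ≠ c, sqDist (f c) (f v) = R)
    (hne : ∀ u v, u ≠ c → v ≠ c → u ≠ v → signedArea (f c) (f u) (f v) ≠ 0) :
    Function.Injective f := by
  have hc (v : V) (hv : v ≠ c) : f c ≠ f v := fun h ↦ by
    have hRv := hcirc v hv
    simp only [← h, sqDist, sub_self, ne_eq, OfNat.ofNat_ne_zero, not_false_eq_true, zero_pow,
      add_zero] at hRv
    exact hR.ne hRv
  intro u v huv
  by_contra huv'
  obtain rfl | hu := eq_or_ne u c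
  · exact hc v (Ne.symm huv') huv
  obtain rfl | hv := eq_or_ne v c
  · exact hc u huv' huv.symm
  exact hne u v hu hv huv' (by rw [huv, signedArea_self])

theorem isRectDrawing_of_sqDist_eq [Finite V] {R : ℝ} (hR : 0 < R)
    (hcirc : ∀ v ≠ c, sqDist (f c) (f v) = R)
    (hne : ∀ u v, u ≠ c → v ≠ c → u ≠ v → signedArea (f c) (f u) (f v) ≠ 0) :
    IsRectDrawing f := by
  refine isRectDrawing_iff.2 ⟨injective_of_sqDist_eq hR hcirc hne, fun u v w huv huw hvw ↦ ?_⟩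
  obtain rfl | hu := eq_or_ne u c
  · exact hne v w huv.symm huw.symm hvw
  obtain rfl | hv := eq_or_ne v c
  · rw [signedArea_rotate]
    exact hne w u hvw.symm hu huw.symm
  obtain rfl | hw := eq_or_ne w c
  · rw [← signedArea_rotate]
    exact hne u v hu hv huv
  exact signedArea_ne_zero_of_sqDist_eq (hcirc u hu) (hcirc v hv) (hcirc w hw) (hne u v hu hv huv)
    (hne v w hv hw hvw) (hne w u hw hu huw.symm)

variable [DecidableEq V]

/-- The line spanned by the images of the two elements of `e` separates the images of `s` and `t`;
only sets `e` with two elements are of interest. -/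
def PairSeparates (f : V → Pt) (e : Finset V) (s t : V) : Prop :=
  ∃ a b, e = {a, b} ∧ Separates (lineThrough (f a) (f b)) (f s) (f t)

theorem pairSeparates_pair_iff (hf : Function.Injective f) {a b : V} (hab : a ≠ b) (s t : V) :
    PairSeparates f {a, b} s t ↔
      signedArea (f a) (f b) (f s) * signedArea (f a) (f b) (f t) < 0 := by
  rw [← separates_lineThrough_iff (hf.ne hab)]
  refine ⟨fun ⟨a', b', he, hsep⟩ ↦ ?_, fun hsep ↦ ⟨a, b, rfl, hsep⟩⟩
  rw [← coe_inj, coe_pair, coe_pair, Set.pair_eq_pair_iff] at he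
  obtain ⟨rfl, rfl⟩ | ⟨rfl, rfl⟩ := he
  · exact hsep
  · rwa [lineThrough, Set.pair_comm]

open scoped Classical in
theorem card_filter_pairSeparates_triple (hf : Function.Injective f) {a b d : V} (hab : a ≠ b)
    (had : a ≠ d) (hbd : b ≠ d) :
    #{t ∈ ({a, b, d} : Finset V) | PairSeparates f (({a, b, d} : Finset V).erase t) c t} =
      (if signedArea (f c) (f b) (f d) * signedArea (f a) (f b) (f d) < 0 then 1 else 0) +
      (if signedArea (f c) (f d) (f a) * signedArea (f a) (f b) (f d) < 0 then 1 else 0) +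
      (if signedArea (f c) (f a) (f b) * signedArea (f a) (f b) (f d) < 0 then 1 else 0) := by
  rw [card_filter_erase_triple hab had hbd fun t e ↦ PairSeparates f e c t]
  simp only [pairSeparates_pair_iff hf hbd, pairSeparates_pair_iff hf had.symm,
    pairSeparates_pair_iff hf hab, ← signedArea_rotate (f c), ← signedArea_rotate (f a) (f b),
    signedArea_rotate (f d) (f a) (f b)]

variable [Fintype V]

/-- The vertices `j ≠ c` which are drawn strictly to the left of the line directed from `f c`
to `f i`. -/
noncomputable def leftLeaves (f : V → Pt) (c i : V) : Finset V :=
  open scoped Classical in {j ∈ {c}ᶜ | 0 < signedArea (f c) (f i) (f j)}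

theorem mem_leftLeaves {i j : V} :
    j ∈ leftLeaves f c i ↔ j ≠ c ∧ 0 < signedArea (f c) (f i) (f j) := by
  simp [leftLeaves]

theorem sum_card_leftLeaves
    (hne : ∀ u v, u ≠ c → v ≠ c → u ≠ v → signedArea (f c) (f u) (f v) ≠ 0) :
    ∑ i ∈ {c}ᶜ, #(leftLeaves f c i) = (#({c}ᶜ : Finset V)).choose 2 := by
  classical
  refine sum_card_tournament_eq_choose_two (fun i _ ↦ by simp [signedArea_self])
    fun i hi j hj hij ↦ ?_
  rw [signedArea_swap, Left.neg_pos_iff, not_lt]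
  exact ((hne j i (by simpa using hj) (by simpa using hi) hij.symm).le_iff_lt).symm

open scoped Classical in
theorem sum_sepCount_eq_sum_powersetCard (f : V → Pt) (c : V) :
    ∑ t ∈ {c}ᶜ, sepCount f c t =
      ∑ T ∈ powersetCard 3 {c}ᶜ, #{t ∈ T | PairSeparates f (T.erase t) c t} := by
  rw [← sum_card_filter_powersetCard _ 2 fun t e ↦ PairSeparates f e c t]
  refine sum_congr rfl fun t _ ↦ ?_
  rw [sepCount, ← Set.ncard_coe_finset]
  congr 1
  ext e
  simp only [mem_coe, mem_filter, mem_powersetCard, subset_compl_singleton,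
    Set.mem_ofPred_eq]
  constructor
  · rintro ⟨a, b, rfl, hab, hc, ht, hsep⟩
    exact ⟨⟨hc, card_pair hab⟩, ht, a, b, rfl, hsep⟩
  · rintro ⟨⟨hc, hcard⟩, ht, a, b, rfl, hsep⟩
    refine ⟨a, b, rfl, ?_, hc, ht, hsep⟩
    rintro rfl
    simp at hcard

open scoped Classical in
theorem sum_choose_two_card_leftLeaves_eq_sum_powersetCard (f : V → Pt) (c : V) :
    ∑ i ∈ {c}ᶜ, (#(leftLeaves f c i)).choose 2 =
      ∑ T ∈ powersetCard 3 {c}ᶜ, #{i ∈ T | T.erase i ⊆ leftLeaves f c i} := by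
  rw [← sum_card_filter_powersetCard _ 2 fun i e ↦ e ⊆ leftLeaves f c i]
  refine sum_congr rfl fun i _ ↦ ?_
  rw [← card_powersetCard]
  congr 1
  ext e
  have hleft : leftLeaves f c i ⊆ {c}ᶜ := filter_subset _ _
  have hi : i ∉ leftLeaves f c i := by simp [mem_leftLeaves, signedArea_self]
  simp only [mem_powersetCard, mem_filter]
  grind

open scoped Classical in
theorem card_filter_subset_leftLeaves_triple {a b d : V} (ha : a ≠ c) (hb : b ≠ c) (hd : d ≠ c)
    (hab : a ≠ b) (had : a ≠ d) (hbd : b ≠ d) :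
    #{i ∈ ({a, b, d} : Finset V) | ({a, b, d} : Finset V).erase i ⊆ leftLeaves f c i} =
      (if 0 < signedArea (f c) (f a) (f b) ∧ signedArea (f c) (f d) (f a) < 0 then 1 else 0) +
      (if 0 < signedArea (f c) (f b) (f d) ∧ signedArea (f c) (f a) (f b) < 0 then 1 else 0) +
      (if 0 < signedArea (f c) (f d) (f a) ∧ signedArea (f c) (f b) (f d) < 0 then 1 else 0) := by
  rw [card_filter_erase_triple hab had hbd fun i e ↦ e ⊆ leftLeaves f c i]
  simp only [insert_subset_iff, singleton_subset_iff, mem_leftLeaves, ha, hb, hd, ne_eq,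
    not_false_eq_true, true_and, signedArea_swap (f c) (f a) (f d),
    signedArea_swap (f c) (f b) (f a), signedArea_swap (f c) (f d) (f b), Left.neg_pos_iff]

theorem sum_choose_two_card_leftLeaves_le_sum_sepCount (hf : IsRectDrawing f) (c : V) :
    ∑ i ∈ {c}ᶜ, (#(leftLeaves f c i)).choose 2 ≤ ∑ t ∈ {c}ᶜ, sepCount f c t := by
  rw [sum_sepCount_eq_sum_powersetCard, sum_choose_two_card_leftLeaves_eq_sum_powersetCard]
  refine sum_le_sum fun T hT ↦ ?_
  obtain ⟨hTc, hcard⟩ := mem_powersetCard.1 hT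
  obtain ⟨a, b, d, hab, had, hbd, rfl⟩ := card_eq_three.1 hcard
  simp only [insert_subset_iff, singleton_subset_iff, mem_compl, mem_singleton] at hTc
  obtain ⟨ha, hb, hd⟩ := hTc
  rw [card_filter_pairSeparates_triple hf.1 hab had hbd,
    card_filter_subset_leftLeaves_triple ha hb hd hab had hbd]
  have hne := (isRectDrawing_iff.1 hf).2
  exact sources_le_minority (hne c a b (Ne.symm ha) (Ne.symm hb) hab)
    (hne c b d (Ne.symm hb) (Ne.symm hd) hbd) (hne c d a (Ne.symm hd) (Ne.symm ha) had.symm)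
    (hne a b d hab had hbd)

theorem sum_sepCount_eq_sum_choose_two_card_leftLeaves {R : ℝ} (hR : 0 < R)
    (hcirc : ∀ v ≠ c, sqDist (f c) (f v) = R)
    (hne : ∀ u v, u ≠ c → v ≠ c → u ≠ v → signedArea (f c) (f u) (f v) ≠ 0) :
    ∑ t ∈ {c}ᶜ, sepCount f c t = ∑ i ∈ {c}ᶜ, (#(leftLeaves f c i)).choose 2 := by
  rw [sum_sepCount_eq_sum_powersetCard, sum_choose_two_card_leftLeaves_eq_sum_powersetCard]
  refine sum_congr rfl fun T hT ↦ ?_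
  obtain ⟨hTc, hcard⟩ := mem_powersetCard.1 hT
  obtain ⟨a, b, d, hab, had, hbd, rfl⟩ := card_eq_three.1 hcard
  simp only [insert_subset_iff, singleton_subset_iff, mem_compl, mem_singleton] at hTc
  obtain ⟨ha, hb, hd⟩ := hTc
  rw [card_filter_pairSeparates_triple (injective_of_sqDist_eq hR hcirc hne) hab had hbd,
    card_filter_subset_leftLeaves_triple ha hb hd hab had hbd]
  obtain ⟨hxy, hyz, hzx⟩ := sign_signedArea_of_sqDist_eq (hcirc a ha) (hcirc b hb) (hcirc d hd)
  exact minority_eq_sources (hne a b ha hb hab) (hne b d hb hd hbd)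
    (hne d a hd ha had.symm) hxy hyz hzx

end Drawing

section StarGraph

variable {n : ℕ}

theorem drawingCrossings_starGraph (f : Fin (n + 1) → Pt) :
    drawingCrossings (starGraph n) f = ∑ t ∈ {0}ᶜ, sepCount f 0 t := by
  have hedges : (starGraph n).edgeSet.toFinite.toFinset =
      ({0}ᶜ : Finset (Fin (n + 1))).image (s(0, ·)) := by
    ext e
    simp only [starGraph, Set.Finite.mem_toFinset, SimpleGraph.edgeSet_fromEdgeSet, Set.mem_sdiff,
      Set.mem_ofPred_eq, mem_image, mem_compl, mem_singleton, ← Fin.exists_succ_eq]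
    constructor
    · rintro ⟨⟨i, rfl⟩, -⟩
      exact ⟨i.succ, ⟨i, rfl⟩, rfl⟩
    · rintro ⟨_, ⟨i, rfl⟩, rfl⟩
      exact ⟨⟨i, rfl⟩, by simp [(Fin.succ_ne_zero i).symm]⟩
  rw [drawingCrossings, hedges, sum_image fun _ _ _ _ ↦ Sym2.congr_right.1]
  rfl

theorem le_drawingCrossings_starGraph {f : Fin (n + 1) → Pt} (hf : IsRectDrawing f) :
    n * ((n - 1) / 2) * ((n - 2) / 2) / 2 ≤ drawingCrossings (starGraph n) f := by
  have hcard : #({0}ᶜ : Finset (Fin (n + 1))) = n := by simp [card_compl]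
  have hdeg := sum_card_leftLeaves fun u v (hu : u ≠ 0) hv huv ↦
    (isRectDrawing_iff.1 hf).2 0 u v hu.symm hv.symm huv
  calc n * ((n - 1) / 2) * ((n - 2) / 2) / 2
      ≤ ∑ i ∈ {0}ᶜ, (#(leftLeaves f 0 i)).choose 2 := by
        simpa only [hcard] using le_sum_choose_two hdeg
    _ ≤ ∑ t ∈ {0}ᶜ, sepCount f 0 t := sum_choose_two_card_leftLeaves_le_sum_sepCount hf 0
    _ = drawingCrossings (starGraph n) f := (drawingCrossings_starGraph f).symm

/-- The angle of the `k`-th vertex of the regular polygon with `2 * (n / 2) + 1` vertices. -/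
noncomputable def polygonAngle (n k : ℕ) : ℝ :=
  2 * Real.pi * k / (2 * (n / 2 : ℕ) + 1)

/-- An optimal drawing of the star with `n` leaves: the centre is drawn at the centre of a regular
polygon, the leaves at `n` of its vertices. The number `2 * (n / 2) + 1` of vertices is the least
odd number which is at least `n`. -/
noncomputable def polygonStar (n : ℕ) (v : Fin (n + 1)) : Pt :=
  if v = 0 then 0 else (Real.cos (polygonAngle n v), Real.sin (polygonAngle n v))

theorem sqDist_polygonStar {v : Fin (n + 1)} (hv : v ≠ 0) :
    sqDist (polygonStar n 0) (polygonStar n v) = 1 := by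
  simp [polygonStar, sqDist, hv]

theorem signedArea_polygonStar {v w : Fin (n + 1)} (hv : v ≠ 0) (hw : w ≠ 0) :
    signedArea (polygonStar n 0) (polygonStar n v) (polygonStar n w) =
      Real.sin (polygonAngle n w - polygonAngle n v) := by
  simp only [polygonStar, signedArea, hv, hw, if_true, if_false, Prod.fst_zero, Prod.snd_zero,
    Real.sin_sub]
  ring

theorem sin_polygonAngle_sub_pos {v w : ℕ} (hv : v ≤ n) (hw : 1 ≤ w)
    (h : (v < w ∧ w ≤ v + n / 2) ∨ w + n / 2 < v) :
    0 < Real.sin (polygonAngle n w - polygonAngle n v) := by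
  have hn : n ≤ 2 * (n / 2) + 1 := by lia
  have hπ := Real.pi_pos
  unfold polygonAngle
  generalize n / 2 = t at *
  have hm : (0 : ℝ) < 2 * t + 1 := by positivity
  rw [← sub_div]
  rcases h with ⟨hvw, hwv⟩ | hwv
  · have hvw' : (v : ℝ) < w := mod_cast hvw
    have hwv' : (w : ℝ) ≤ v + t := mod_cast hwv
    apply Real.sin_pos_of_pos_of_lt_pi
    · exact div_pos (by nlinarith) hm
    · rw [div_lt_iff₀ hm]
      nlinarith
  · have hwv' : (w : ℝ) + t + 1 ≤ v := mod_cast hwv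
    have hvw' : (v : ℝ) + 1 ≤ w + (2 * t + 1) := by
      have : v + 1 ≤ w + (2 * t + 1) := by lia
      exact_mod_cast this
    rw [← Real.sin_add_two_pi]
    apply Real.sin_pos_of_pos_of_lt_pi
    · rw [← sub_lt_iff_lt_add, zero_sub, lt_div_iff₀ hm]
      nlinarith
    · rw [← lt_sub_iff_add_lt, div_lt_iff₀ hm]
      nlinarith

theorem signedArea_polygonStar_pos {v w : Fin (n + 1)} (hv : v ≠ 0) (hw : w ≠ 0)
    (h : ((v : ℕ) < w ∧ (w : ℕ) ≤ v + n / 2) ∨ w + n / 2 < (v : ℕ)) :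
    0 < signedArea (polygonStar n 0) (polygonStar n v) (polygonStar n w) := by
  rw [signedArea_polygonStar hv hw]
  exact sin_polygonAngle_sub_pos v.is_le (Nat.one_le_iff_ne_zero.2 (Fin.val_ne_zero_iff.2 hw)) h

theorem signedArea_polygonStar_ne_zero {v w : Fin (n + 1)} (hv : v ≠ 0) (hw : w ≠ 0)
    (hvw : v ≠ w) : signedArea (polygonStar n 0) (polygonStar n v) (polygonStar n w) ≠ 0 := by
  have : (v : ℕ) ≠ w := Fin.val_ne_of_ne hvw
  by_cases h : ((v : ℕ) < w ∧ (w : ℕ) ≤ v + n / 2) ∨ w + n / 2 < (v : ℕ)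
  · exact (signedArea_polygonStar_pos hv hw h).ne'
  · rw [signedArea_swap]
    exact neg_ne_zero.2 (signedArea_polygonStar_pos hw hv (by lia)).ne'

theorem signedArea_polygonStar_pos_iff {v w : Fin (n + 1)} (hv : v ≠ 0) (hw : w ≠ 0) :
    0 < signedArea (polygonStar n 0) (polygonStar n v) (polygonStar n w) ↔
      ((v : ℕ) < w ∧ (w : ℕ) ≤ v + n / 2) ∨ w + n / 2 < (v : ℕ) := by
  refine ⟨fun hpos ↦ ?_, signedArea_polygonStar_pos hv hw⟩
  by_contra h
  obtain rfl | hvw := eq_or_ne v w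
  · exact hpos.ne' (signedArea_self _ _)
  have : (v : ℕ) ≠ w := Fin.val_ne_of_ne hvw
  have hneg := signedArea_polygonStar_pos hw hv (by lia)
  rw [signedArea_swap] at hneg
  exact (neg_pos.1 hneg).not_gt hpos

theorem map_leftLeaves_polygonStar {v : Fin (n + 1)} (hv : v ≠ 0) :
    (leftLeaves (polygonStar n) 0 v).map Fin.valEmbedding =
      Ioc (v : ℕ) (min (v + n / 2) n) ∪ Ico 1 (v - n / 2) := by
  ext w
  simp only [mem_map, mem_leftLeaves, Fin.valEmbedding_apply, mem_union, mem_Ioc, mem_Ico]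
  constructor
  · rintro ⟨w, ⟨hw, hpos⟩, rfl⟩
    rw [signedArea_polygonStar_pos_iff hv hw] at hpos
    have := Fin.val_ne_zero_iff.2 hw
    lia
  · intro hw
    have hw0 : (⟨w, by lia⟩ : Fin (n + 1)) ≠ 0 := Fin.val_ne_zero_iff.1 (by simp only; lia)
    refine ⟨⟨w, by lia⟩, ⟨hw0, (signedArea_polygonStar_pos_iff hv hw0).2 ?_⟩, rfl⟩
    simp only
    lia

theorem card_leftLeaves_polygonStar {v : Fin (n + 1)} (hv : v ≠ 0) :
    #(leftLeaves (polygonStar n) 0 v) = (n - 1) / 2 ∨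
      #(leftLeaves (polygonStar n) 0 v) = (n - 1) / 2 + 1 := by
  have hdisj : Disjoint (Ioc (v : ℕ) (min (v + n / 2) n)) (Ico 1 (v - n / 2)) :=
    disjoint_left.2 fun w ↦ by
      simp only [mem_Ioc, mem_Ico]
      lia
  have := Fin.val_ne_zero_iff.2 hv
  rw [← card_map Fin.valEmbedding, map_leftLeaves_polygonStar hv, card_union_of_disjoint hdisj,
    Nat.card_Ioc, Nat.card_Ico]
  lia

theorem isRectDrawing_polygonStar (n : ℕ) : IsRectDrawing (polygonStar n) :=
  isRectDrawing_of_sqDist_eq one_pos (fun _ ↦ sqDist_polygonStar)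
    fun _ _ ↦ signedArea_polygonStar_ne_zero

theorem drawingCrossings_polygonStar (n : ℕ) :
    drawingCrossings (starGraph n) (polygonStar n) =
      n * ((n - 1) / 2) * ((n - 2) / 2) / 2 := by
  have hcard : #({0}ᶜ : Finset (Fin (n + 1))) = n := by simp [card_compl]
  have hne (u v : Fin (n + 1)) (hu : u ≠ 0) (hv : v ≠ 0) (huv : u ≠ v) :=
    signedArea_polygonStar_ne_zero hu hv huv
  calc drawingCrossings (starGraph n) (polygonStar n)
      = ∑ t ∈ {0}ᶜ, sepCount (polygonStar n) 0 t := drawingCrossings_starGraph _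
    _ = ∑ i ∈ {0}ᶜ, (#(leftLeaves (polygonStar n) 0 i)).choose 2 :=
        sum_sepCount_eq_sum_choose_two_card_leftLeaves one_pos (fun _ ↦ sqDist_polygonStar) hne
    _ = n * ((n - 1) / 2) * ((n - 2) / 2) / 2 := by
        simpa only [hcard] using sum_choose_two_eq (sum_card_leftLeaves hne) fun i hi ↦ by
          simpa only [hcard] using card_leftLeaves_polygonStar (by simpa using hi)

end StarGraph

theorem stmt_5_general (n : ℕ) :
    OCN (starGraph n) = n * ((n - 1) / 2) * ((n - 2) / 2) / 2 := by
  refine IsLeast.csInf_eq ⟨⟨polygonStar n, isRectDrawing_polygonStar n,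
    drawingCrossings_polygonStar n⟩, ?_⟩
  rintro _ ⟨f, hf, rfl⟩
  exact le_drawingCrossings_starGraph hf

/-- For even n ≥ 2, `OCN(K_{n,1}) = n(n-2)²/8`. -/
theorem stmt_5 (n : ℕ) (hn : 2 ≤ n) (heven : Even n) :
    OCN (starGraph n) = n * (n - 2) ^ 2 / 8 := by
  obtain ⟨k, rfl⟩ : ∃ k, n = 2 * k + 2 := ⟨n / 2 - 1, by grind⟩
  rw [stmt_5_general, show (2 * k + 2 - 1) / 2 = k by lia, Nat.add_sub_cancel,
    Nat.mul_div_cancel_left k two_pos, show (2 * k + 2) * k * k = (k + 1) * k ^ 2 * 2 by ring,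
    show (2 * k + 2) * (2 * k) ^ 2 = (k + 1) * k ^ 2 * 8 by ring, Nat.mul_div_cancel _ two_pos,
    Nat.mul_div_cancel _ (by norm_num)]
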